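/- Let A and B be bounded self-adjoint operators on a complex Hilbert space H. For m ≥ 1 define F_m(t) = (1/(2π)^m) · (D^{m−1}G_m)′(t), where G_m(s) = s^{2m−1} ∫_{‖ω‖≤1, ω∈ℝ^{2m}} cos(sω₁A/√m)·cos(sω₂B/√m)⋯cos(sω_{2m−1}A/√m)·cos(sω_{2m}B/√m) · (1−‖ω‖²)^{−1/2} dω. Then F_m(t) converges in operator norm to cos(t√(A²+B²)) as m → ∞, uniformly for t in compact subsets of (0,∞); that is, for every 0 < a ≤ b, sup_{t∈[a,b]} ‖F_m(t) − cos(t√(A²+B²))‖ → 0 as m → ∞. -/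

import Mathlib

open MeasureTheory Real Filter

/-- The operator `(Df)(t) = f'(t)/t` for functions with values in a real normed space. -/
noncomputable def Dop {F : Type*} [NormedAddCommGroup F] [NormedSpace ℝ F]
    (f : ℝ → F) : ℝ → F := fun t => t⁻¹ • deriv f t

/-- `cos (s • T)` defined by its norm-convergent power series
`∑ (-1)^k s^(2k) T^(2k) / (2k)!`. -/
noncomputable def cosOp {H : Type*} [NormedAddCommGroup H] [InnerProductSpace ℂ H]
    (s : ℝ) (T : H →L[ℂ] H) : H →L[ℂ] H :=
  ∑' k : ℕ, (((-1:ℝ)^k * s^(2*k)) / (Nat.factorial (2*k) : ℝ)) • T^(2*k)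

/-
Everything is a computation with Taylor coefficients. With `x = A²` and `y = B²`, each factor of the
integrand is a series `cos (s √(ωᵢ² xᵢ))` where `xᵢ` alternates between `x / m` and `y / m`. The
monomial moments of the weighted ball are Dirichlet integrals, and the half-integer Gamma factors in
them turn the coefficients `(-1)ᵏ / (2k)!` of the cosines into `√π (-1/4)ᵏ / k!`. Hence the integral
is the Trotter product `(exp (z x / m) exp (z y / m))ᵐ` at `z = s²`, except that its `N`-th
coefficient is multiplied by a scalar depending on `N` and `m` only. Up to the factor `(2π)ᵐ`, this
scalar is `(-1)ᴺ N! / (2N)!` divided by `∏_{i < m} (2N + 2i + 1)`, and `D ^ (m - 1)` followed by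
`d/dt` sends `t ^ (2N + 2m - 1)` to exactly this product times `t ^ (2N)`. So `F_m(t)` arises from
the Trotter product as `cos (t √(x + y))` arises from `exp (z (x + y))`, and the `O(1/m)` Trotter
error, estimated coefficientwise by majorant series, gives the uniform convergence.
-/

section Products

open Finset PowerSeries

theorem sum_antidiagonalTuple_succ {M : Type*} [AddCommMonoid M] (n N : ℕ)
    (f : (Fin (n + 1) → ℕ) → M) :
    ∑ k ∈ Nat.antidiagonalTuple (n + 1) N, f k =
      ∑ p ∈ antidiagonal N, ∑ k ∈ Nat.antidiagonalTuple n p.2,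
        f (Fin.cons p.1 k) := by
  rw [sum_sigma']
  refine sum_bij' (fun k _ => ⟨(k 0, ∑ i : Fin n, k i.succ), Fin.tail k⟩)
    (fun s _ => Fin.cons s.1.1 s.2) ?_ ?_ ?_ ?_ ?_
  · intro k hk
    rw [Nat.mem_antidiagonalTuple, Fin.sum_univ_succ] at hk
    simp [Nat.mem_antidiagonalTuple, hk, Fin.tail]
  · rintro ⟨⟨a, b⟩, k⟩ hk
    simp only [mem_sigma, HasAntidiagonal.mem_antidiagonal,
      Nat.mem_antidiagonalTuple] at hk
    simp [Nat.mem_antidiagonalTuple, Fin.sum_univ_succ, hk]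
  · simp
  · rintro ⟨⟨a, b⟩, k⟩ hk
    simp only [mem_sigma, HasAntidiagonal.mem_antidiagonal,
      Nat.mem_antidiagonalTuple] at hk
    simp [hk.2]
  · simp

theorem coeff_prod_ofFn {R : Type*} [Semiring R] {n : ℕ} (φ : Fin n → R⟦X⟧) (N : ℕ) :
    coeff N (List.ofFn φ).prod =
      ∑ k ∈ Nat.antidiagonalTuple n N,
        (List.ofFn fun i => coeff (k i) (φ i)).prod := by
  induction n generalizing N with
  | zero => cases N <;> simp [coeff_one]
  | succ n ih =>
    rw [sum_antidiagonalTuple_succ]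
    simp [List.ofFn_succ, coeff_mul, ih, mul_sum]

theorem prod_ofFn_smul {S A : Type*} [CommSemiring S] [Semiring A] [Algebra S A] {n : ℕ}
    (r : Fin n → S) (x : Fin n → A) :
    (List.ofFn fun i => r i • x i).prod = (∏ i, r i) • (List.ofFn x).prod :=
  (MultilinearMap.mkPiAlgebraFin S n A).map_smul_univ r x

theorem prod_ofFn_alternate {M : Type*} [Monoid M] (a b : M) (m : ℕ) :
    (List.ofFn fun i : Fin (2 * m) => if (i : ℕ) % 2 = 0 then a else b).prod = (a * b) ^ m := by
  rw [List.ofFn_mul']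
  simp [List.prod_flatten, List.ofFn_succ]

end Products

section ExpSeries

open PowerSeries

variable {R : Type*} [Ring R] [Algebra ℝ R]

/-- The exponential series `exp (z x) = ∑ zⁿ xⁿ / n!` of an element `x` of a real algebra, as a
formal power series in `z`. -/
noncomputable def expSeries (x : R) : R⟦X⟧ :=
  PowerSeries.mk fun n => (n.factorial : ℝ)⁻¹ • x ^ n

/-- The series `cos √(z x) = ∑ (-1)ⁿ zⁿ xⁿ / (2n)!` of an element `x` of a real algebra, as a
formal power series in `z`. -/
noncomputable def cosSeries (x : R) : R⟦X⟧ :=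
  PowerSeries.mk fun n => ((-1) ^ n / (2 * n).factorial : ℝ) • x ^ n

theorem coeff_expSeries (x : R) (n : ℕ) :
    coeff n (expSeries x) = (n.factorial : ℝ)⁻¹ • x ^ n :=
  coeff_mk ..

/-- The ratio `(-1)ⁿ n! / (2n)!` of the `n`-th Taylor coefficients of `cos √z` and `exp z`. -/
noncomputable def cosRatio (n : ℕ) : ℝ :=
  (-1) ^ n * n.factorial / (2 * n).factorial

theorem coeff_cosSeries (x : R) (n : ℕ) :
    coeff n (cosSeries x) = cosRatio n • coeff n (expSeries x) := by
  rw [cosSeries, coeff_mk, coeff_expSeries, smul_smul, cosRatio]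
  congr 1
  field_simp

theorem coeff_cosSeries_smul (c : ℝ) (x : R) (n : ℕ) :
    coeff n (cosSeries (c • x)) = c ^ n • coeff n (cosSeries x) := by
  rw [cosSeries, cosSeries, coeff_mk, coeff_mk, smul_pow, smul_comm]

theorem expSeries_zero : expSeries (0 : R) = 1 := by
  ext n
  rcases n with _ | n <;> simp [coeff_expSeries, coeff_one]

theorem expSeries_add_of_commute {x y : R} (h : Commute x y) :
    expSeries (x + y) = expSeries x * expSeries y := by
  ext n
  rw [coeff_mul, coeff_expSeries, h.add_pow', Finset.smul_sum]
  refine Finset.sum_congr rfl fun p hp => ?_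
  rw [← Finset.HasAntidiagonal.mem_antidiagonal.1 hp, coeff_expSeries, coeff_expSeries,
    smul_mul_smul_comm, ← Nat.cast_smul_eq_nsmul ℝ, smul_smul, Nat.cast_add_choose]
  congr 1
  field_simp

theorem expSeries_nsmul (m : ℕ) (x : R) : expSeries (m • x) = expSeries x ^ m := by
  induction m with
  | zero => simp [expSeries_zero]
  | succ m ih =>
    rw [succ_nsmul, expSeries_add_of_commute ((Commute.refl x).smul_left m), ih, pow_succ]

theorem expSeries_inv_smul_pow {m : ℕ} (hm : m ≠ 0) (x : R) :
    expSeries ((m : ℝ)⁻¹ • x) ^ m = expSeries x := by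
  rw [← expSeries_nsmul, ← Nat.cast_smul_eq_nsmul ℝ, smul_inv_smul₀ (Nat.cast_ne_zero.2 hm)]

theorem constantCoeff_expSeries (x : R) : constantCoeff (expSeries x) = 1 := by
  simp [← coeff_zero_eq_constantCoeff_apply, coeff_expSeries]

theorem coeff_one_expSeries (x : R) : coeff 1 (expSeries x) = x := by
  simp [coeff_expSeries]

end ExpSeries

section Majorants

open PowerSeries

variable {R : Type*} [NormedRing R] [NormedAlgebra ℝ R]

/-- The real power series `f` is a majorant of `φ`: each coefficient of `φ`, acting by left
multiplication, has norm at most the corresponding coefficient of `f`. The operator norm is used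
rather than the norm of `R` so that `1` majorizes `1` even if `‖1‖ ≠ 1`, as in the zero ring. -/
def IsMajorizedBy (φ : R⟦X⟧) (f : ℝ⟦X⟧) : Prop :=
  ∀ n, ‖ContinuousLinearMap.mul ℝ R (coeff n φ)‖ ≤ coeff n f

variable {φ ψ : R⟦X⟧} {f g : ℝ⟦X⟧}

theorem opNorm_mul_mul_le (x y : R) : ‖ContinuousLinearMap.mul ℝ R (x * y)‖ ≤
    ‖ContinuousLinearMap.mul ℝ R x‖ * ‖ContinuousLinearMap.mul ℝ R y‖ := by
  have h : ContinuousLinearMap.mul ℝ R (x * y) =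
      (ContinuousLinearMap.mul ℝ R x).comp (ContinuousLinearMap.mul ℝ R y) := by
    ext z
    simp [mul_assoc]
  exact h ▸ ContinuousLinearMap.opNorm_comp_le _ _

theorem opNorm_mul_one_le : ‖ContinuousLinearMap.mul ℝ R 1‖ ≤ 1 :=
  ContinuousLinearMap.opNorm_le_bound _ zero_le_one fun z => by simp

theorem opNorm_mul_pow_le (x : R) (n : ℕ) :
    ‖ContinuousLinearMap.mul ℝ R (x ^ n)‖ ≤ ‖x‖ ^ n := by
  induction n with
  | zero => simpa using opNorm_mul_one_le
  | succ n ih =>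
    rw [pow_succ, pow_succ]
    exact (opNorm_mul_mul_le _ _).trans
      (mul_le_mul ih (ContinuousLinearMap.opNorm_mul_apply_le ..) (norm_nonneg _) (by positivity))

theorem norm_le_opNorm_mul_mul_norm_one (x : R) :
    ‖x‖ ≤ ‖ContinuousLinearMap.mul ℝ R x‖ * ‖(1 : R)‖ := by
  simpa using (ContinuousLinearMap.mul ℝ R x).le_opNorm 1

namespace IsMajorizedBy

theorem norm_coeff_le (h : IsMajorizedBy φ f) (n : ℕ) :
    ‖coeff n φ‖ ≤ coeff n f * ‖(1 : R)‖ :=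
  (norm_le_opNorm_mul_mul_norm_one _).trans
    (mul_le_mul_of_nonneg_right (h n) (norm_nonneg _))

theorem add (hφ : IsMajorizedBy φ f) (hψ : IsMajorizedBy ψ g) :
    IsMajorizedBy (φ + ψ) (f + g) := fun n => by
  rw [map_add, map_add, map_add]
  exact (norm_add_le _ _).trans (add_le_add (hφ n) (hψ n))

theorem mul (hφ : IsMajorizedBy φ f) (hψ : IsMajorizedBy ψ g) :
    IsMajorizedBy (φ * ψ) (f * g) := fun n => by
  rw [coeff_mul, coeff_mul, map_sum]
  refine norm_sum_le_of_le _ fun p _ => (opNorm_mul_mul_le _ _).trans ?_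
  exact mul_le_mul (hφ p.1) (hψ p.2) (norm_nonneg _) ((norm_nonneg _).trans (hφ p.1))

theorem one : IsMajorizedBy (1 : R⟦X⟧) 1 := fun n => by
  rcases eq_or_ne n 0 with rfl | hn
  · simpa using opNorm_mul_one_le
  · simp [coeff_one, hn]

theorem pow (h : IsMajorizedBy φ f) (m : ℕ) : IsMajorizedBy (φ ^ m) (f ^ m) := by
  induction m with
  | zero => simpa using one
  | succ m ih => simpa only [pow_succ] using ih.mul h

theorem pow_sub_pow (hφ : IsMajorizedBy φ f) (hψ : IsMajorizedBy ψ f)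
    (h : IsMajorizedBy (φ - ψ) g) (m : ℕ) :
    IsMajorizedBy (φ ^ m - ψ ^ m) (m • (f ^ (m - 1) * g)) := by
  rcases m with _ | m
  · simp [IsMajorizedBy]
  induction m with
  | zero => simpa using h
  | succ m ih =>
    have telescope : φ ^ (m + 2) - ψ ^ (m + 2) =
        φ ^ (m + 1) * (φ - ψ) + (φ ^ (m + 1) - ψ ^ (m + 1)) * ψ := by
      rw [pow_succ φ, pow_succ ψ]
      noncomm_ring
    have majorant : (m + 2) • (f ^ (m + 1) * g) =
        f ^ (m + 1) * g + (m + 1) • (f ^ m * g) * f := by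
      simp only [nsmul_eq_mul]
      push_cast
      ring
    rw [telescope, Nat.add_sub_cancel, majorant]
    exact ((hφ.pow _).mul h).add (ih.mul hψ)

theorem expSeries_of_norm_le {x : R} {c : ℝ} (h : ‖x‖ ≤ c) :
    IsMajorizedBy (expSeries x) (expSeries c) := fun n => by
  rw [coeff_expSeries, coeff_expSeries, map_smul, norm_smul, norm_of_nonneg (by positivity)]
  exact mul_le_mul_of_nonneg_left ((opNorm_mul_pow_le x n).trans (by gcongr)) (by positivity)

theorem prod_ofFn_expSeries {n : ℕ} {φ : Fin n → R⟦X⟧} {c : Fin n → ℝ}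
    (h : ∀ i, IsMajorizedBy (φ i) (expSeries (c i))) :
    IsMajorizedBy (List.ofFn φ).prod (expSeries (∑ i, c i)) := by
  induction n with
  | zero => simpa [expSeries_zero] using one
  | succ n ih =>
    rw [List.ofFn_succ, List.prod_cons, Fin.sum_univ_succ,
      expSeries_add_of_commute (Commute.all _ _)]
    exact (h 0).mul (ih fun i => h i.succ)

theorem sub_of_coeff_zero_of_coeff_one {c : ℝ} (hφ : IsMajorizedBy φ (expSeries c))
    (hψ : IsMajorizedBy ψ (expSeries c)) (h₀ : coeff 0 φ = coeff 0 ψ)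
    (h₁ : coeff 1 φ = coeff 1 ψ) :
    IsMajorizedBy (φ - ψ) (c ^ 2 • (X ^ 2 * expSeries c)) := by
  rintro (_ | _ | n)
  · simp [h₀, -coeff_zero_eq_constantCoeff, coeff_X_pow_mul']
  · simp [h₁, coeff_X_pow_mul']
  have hc : 0 ≤ c ^ (n + 2) / (n + 2).factorial := by
    simpa [coeff_expSeries, div_eq_inv_mul] using (norm_nonneg _).trans (hφ (n + 2))
  have two_le : (2 : ℝ) ≤ (n + 2) * (n + 1) := by norm_cast; nlinarith
  calc ‖ContinuousLinearMap.mul ℝ R (coeff (n + 2) (φ - ψ))‖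
      ≤ coeff (n + 2) (expSeries c) + coeff (n + 2) (expSeries c) := by
        rw [map_sub, map_sub]
        exact (norm_sub_le _ _).trans (add_le_add (hφ _) (hψ _))
    _ = 2 * (c ^ (n + 2) / (n + 2).factorial) := by
        rw [coeff_expSeries, smul_eq_mul]; ring
    _ ≤ ((n + 2) * (n + 1)) * (c ^ (n + 2) / (n + 2).factorial) := by gcongr
    _ = coeff (n + 2) (c ^ 2 • (X ^ 2 * expSeries c)) := by
        rw [coeff_smul, coeff_X_pow_mul, coeff_expSeries, Nat.factorial_succ, Nat.factorial_succ]
        push_cast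
        simp only [smul_eq_mul]
        field_simp
        ring

end IsMajorizedBy

/-- The `m`-th Lie–Trotter approximation `(exp (z x / m) exp (z y / m))ᵐ` of `exp (z (x + y))`, as a
formal power series in `z`. -/
noncomputable def trotterSeries (x y : R) (m : ℕ) : R⟦X⟧ :=
  (expSeries ((m : ℝ)⁻¹ • x) * expSeries ((m : ℝ)⁻¹ • y)) ^ m

theorem isMajorizedBy_expSeries_smul_mul_expSeries_smul (x y : R) {a : ℝ} (ha : 0 ≤ a) :
    IsMajorizedBy (expSeries (a • x) * expSeries (a • y)) (expSeries (a • (‖x‖ + ‖y‖))) := by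
  rw [smul_add, expSeries_add_of_commute (Commute.all _ _)]
  exact (IsMajorizedBy.expSeries_of_norm_le (norm_smul_of_nonneg ha x).le).mul
    (IsMajorizedBy.expSeries_of_norm_le (norm_smul_of_nonneg ha y).le)

theorem isMajorizedBy_trotterSeries (x y : R) {m : ℕ} (hm : m ≠ 0) :
    IsMajorizedBy (trotterSeries x y m) (expSeries (‖x‖ + ‖y‖)) := by
  rw [← expSeries_inv_smul_pow hm (‖x‖ + ‖y‖)]
  exact (isMajorizedBy_expSeries_smul_mul_expSeries_smul x y (by positivity)).pow m

theorem isMajorizedBy_trotterSeries_sub_expSeries (x y : R) {m : ℕ} (hm : m ≠ 0) :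
    IsMajorizedBy (trotterSeries x y m - expSeries (x + y))
      (((‖x‖ + ‖y‖) ^ 2 / m) • (X ^ 2 * expSeries (‖x‖ + ‖y‖))) := by
  set a : ℝ := (m : ℝ)⁻¹ with ha
  set ρ := ‖x‖ + ‖y‖
  have ha0 : 0 ≤ a := by positivity
  have hφ : IsMajorizedBy (expSeries (a • x) * expSeries (a • y)) (expSeries (a • ρ)) :=
    isMajorizedBy_expSeries_smul_mul_expSeries_smul x y ha0
  have hψ : IsMajorizedBy (expSeries (a • (x + y))) (expSeries (a • ρ)) := by
    refine IsMajorizedBy.expSeries_of_norm_le ?_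
    rw [norm_smul_of_nonneg ha0]
    exact mul_le_mul_of_nonneg_left (norm_add_le x y) ha0
  have hdiff := hφ.sub_of_coeff_zero_of_coeff_one hψ
    (by simp [constantCoeff_expSeries])
    (by simp [coeff_mul, Finset.Nat.antidiagonal_succ, constantCoeff_expSeries,
      coeff_one_expSeries, add_comm])
  have hmajorant :
      m • (expSeries (a • ρ) ^ (m - 1) * ((a • ρ) ^ 2 • (X ^ 2 * expSeries (a • ρ)))) =
        (ρ ^ 2 / m) • (X ^ 2 * expSeries ρ) := by
    rw [mul_smul_comm, mul_left_comm, pow_sub_one_mul hm, expSeries_inv_smul_pow hm,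
      ← Nat.cast_smul_eq_nsmul ℝ, smul_smul, ha, smul_eq_mul]
    congr 1
    field_simp
  rw [trotterSeries, ← expSeries_inv_smul_pow hm (x + y), ← hmajorant]
  exact hφ.pow_sub_pow hψ hdiff m

end Majorants

section EvenSums

variable {F : Type*} [NormedAddCommGroup F]

/-- The sequence `a` is the coefficient sequence of an entire function, that is, the power series
`∑ aₙ zⁿ` converges absolutely everywhere. -/
def HasEntireCoeffs (a : ℕ → F) : Prop :=
  ∀ r : ℝ, Summable fun n => r ^ n * ‖a n‖

theorem HasEntireCoeffs.of_norm_le {E : Type*} [NormedAddCommGroup E] {a : ℕ → E} {b : ℕ → F}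
    {C q : ℝ} (ha : HasEntireCoeffs a) (h : ∀ n, ‖b n‖ ≤ C * q ^ n * ‖a n‖) :
    HasEntireCoeffs b := fun r => by
  refine .of_norm_bounded ((ha (|r| * q)).mul_left C) fun n => ?_
  rw [norm_mul, norm_norm, norm_pow, norm_eq_abs]
  calc |r| ^ n * ‖b n‖ ≤ |r| ^ n * (C * q ^ n * ‖a n‖) := by gcongr; exact h n
    _ = C * ((|r| * q) ^ n * ‖a n‖) := by ring

variable [NormedSpace ℝ F] {a : ℕ → F}

/-- The value at `t` of the even power series `∑ aₙ t²ⁿ` with vector coefficients `aₙ`. -/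
noncomputable def evenSum (a : ℕ → F) (t : ℝ) : F :=
  ∑' n, t ^ (2 * n) • a n

namespace HasEntireCoeffs

theorem smul {c : ℕ → ℝ} {C q : ℝ} (ha : HasEntireCoeffs a) (h : ∀ n, |c n| ≤ C * q ^ n) :
    HasEntireCoeffs fun n => c n • a n :=
  ha.of_norm_le fun n => by
    rw [norm_smul, norm_eq_abs]
    exact mul_le_mul_of_nonneg_right (h n) (norm_nonneg _)

theorem affine_smul (ha : HasEntireCoeffs a) (c d : ℝ) :
    HasEntireCoeffs fun n => (c * n + d) • a n :=
  ha.smul (C := |c| + |d|) (q := 2) fun n => by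
    have hn : (n : ℝ) ≤ 2 ^ n := by exact_mod_cast Nat.lt_two_pow_self.le
    have one_le : (1 : ℝ) ≤ 2 ^ n := one_le_pow₀ one_le_two
    calc |c * n + d| ≤ |c| * n + |d| * 1 := by
          rw [mul_one, ← Nat.abs_cast n, ← abs_mul, Nat.abs_cast]
          exact abs_add_le _ _
      _ ≤ |c| * 2 ^ n + |d| * 2 ^ n := by gcongr
      _ = (|c| + |d|) * 2 ^ n := by ring

theorem summable_norm (ha : HasEntireCoeffs a) (t : ℝ) :
    Summable fun n => ‖t ^ (2 * n) • a n‖ := by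
  simpa only [norm_smul, norm_pow, pow_mul, norm_eq_abs, sq_abs] using ha (t ^ 2)

theorem summable [CompleteSpace F] (ha : HasEntireCoeffs a) (t : ℝ) :
    Summable fun n => t ^ (2 * n) • a n :=
  (ha.summable_norm t).of_norm

theorem hasDerivAt_pow_succ_smul_evenSum [CompleteSpace F] (ha : HasEntireCoeffs a) (p : ℕ)
    (t : ℝ) :
    HasDerivAt (fun s => s ^ (p + 1) • evenSum a s)
      (t ^ p • evenSum (fun n => (2 * n + (p + 1) : ℝ) • a n) t) t := by
  set r := |t| + 1
  have ht : t ∈ Metric.ball (0 : ℝ) r := by simp [r]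
  have hu : Summable fun n : ℕ => r ^ p * ((r ^ 2) ^ n * ‖(2 * n + (p + 1) : ℝ) • a n‖) :=
    (ha.affine_smul 2 (p + 1) (r ^ 2)).mul_left _
  have hderiv (n : ℕ) (s : ℝ) : HasDerivAt (fun s => s ^ (p + 1) • s ^ (2 * n) • a n)
      (s ^ p • s ^ (2 * n) • (2 * n + (p + 1) : ℝ) • a n) s := by
    have h := (hasDerivAt_pow (p + 1 + 2 * n) s).smul_const (a n)
    simp only [smul_smul, ← pow_add]
    convert h using 2
    rw [show p + 1 + 2 * n - 1 = p + 2 * n by omega]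
    push_cast
    ring
  have hbound (n : ℕ) (s : ℝ) (hs : s ∈ Metric.ball (0 : ℝ) r) :
      ‖s ^ p • s ^ (2 * n) • (2 * n + (p + 1) : ℝ) • a n‖ ≤
        r ^ p * ((r ^ 2) ^ n * ‖(2 * n + (p + 1) : ℝ) • a n‖) := by
    have hs : ‖s‖ ≤ r := (mem_ball_zero_iff.1 hs).le
    rw [norm_smul, norm_smul, norm_pow, norm_pow, ← pow_mul]
    gcongr
  have h := hasDerivAt_tsum_of_isPreconnected hu Metric.isOpen_ball
    (convex_ball (0 : ℝ) r).isPreconnected (fun n s _ => hderiv n s) hbound ht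
    ((ha.summable t).const_smul _) ht
  simpa only [evenSum, tsum_const_smul''] using h

theorem dop_pow_smul_evenSum [CompleteSpace F] (ha : HasEntireCoeffs a) (p : ℕ) :
    Dop (fun t => t ^ (p + 3) • evenSum a t) =
      fun t => t ^ (p + 1) • evenSum (fun n => (2 * n + (p + 3) : ℝ) • a n) t := by
  funext t
  rw [Dop, (ha.hasDerivAt_pow_succ_smul_evenSum (p + 2) t).deriv, smul_smul]
  rcases eq_or_ne t 0 with rfl | ht
  · simp
  · have hp : t⁻¹ * t ^ (p + 2) = t ^ (p + 1) := by
      field_simp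
      ring
    have hc : ((p + 2 : ℕ) : ℝ) + 1 = p + 3 := by push_cast; ring
    rw [hp, hc]

theorem deriv_dop_iterate_pow_smul_evenSum [CompleteSpace F] (ha : HasEntireCoeffs a) (q : ℕ)
    (t : ℝ) :
    deriv (Dop^[q] fun s => s ^ (2 * q + 1) • evenSum a s) t =
      evenSum (fun n => (∏ i ∈ Finset.range (q + 1), (2 * n + (2 * i + 1) : ℝ)) • a n) t := by
  induction q generalizing a with
  | zero => simpa using (ha.hasDerivAt_pow_succ_smul_evenSum 0 t).deriv
  | succ q ih =>
    rw [Function.iterate_succ_apply, show 2 * (q + 1) + 1 = 2 * q + 3 by ring,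
      ha.dop_pow_smul_evenSum, ih (ha.affine_smul 2 _)]
    congr 1 with n
    rw [smul_smul, Finset.prod_range_succ _ (q + 1)]
    push_cast
    ring_nf

end HasEntireCoeffs

end EvenSums

section CosSqrt

open PowerSeries

variable {R : Type*} [NormedRing R] [NormedAlgebra ℝ R]

theorem hasEntireCoeffs_expSeries (c : ℝ) : HasEntireCoeffs fun n => coeff n (expSeries c) :=
  fun r => by
  simpa [coeff_expSeries, div_eq_inv_mul, mul_pow, mul_left_comm]
    using summable_pow_div_factorial (r * |c|)

theorem IsMajorizedBy.hasEntireCoeffs {φ : R⟦X⟧} {c : ℝ} (h : IsMajorizedBy φ (expSeries c)) :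
    HasEntireCoeffs fun n => coeff n φ :=
  (hasEntireCoeffs_expSeries c).of_norm_le (C := ‖(1 : R)‖) (q := 1) fun n => by
    rw [one_pow, mul_one, mul_comm]
    exact (h.norm_coeff_le n).trans (by gcongr; exact le_norm_self _)

theorem abs_cosRatio_le_one (n : ℕ) : |cosRatio n| ≤ 1 := by
  rw [cosRatio, abs_div, abs_mul, abs_pow, abs_neg, abs_one, one_pow, one_mul, Nat.abs_cast,
    Nat.abs_cast]
  refine div_le_one_of_le₀ ?_ (by positivity)
  exact_mod_cast Nat.factorial_le (Nat.le_mul_of_pos_left n two_pos)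

theorem isMajorizedBy_cosSeries {x : R} {c : ℝ} (h : ‖x‖ ≤ c) :
    IsMajorizedBy (cosSeries x) (expSeries c) := fun n => by
  rw [coeff_cosSeries, map_smul, norm_smul, norm_eq_abs]
  exact (mul_le_of_le_one_left (norm_nonneg _) (abs_cosRatio_le_one n)).trans
    (IsMajorizedBy.expSeries_of_norm_le h n)

/-- `cos (t √x)` for an element `x` of a real Banach algebra. No square root of `x` is needed,
because the cosine is even: the definition is the power series `∑ (-1)ⁿ t²ⁿ xⁿ / (2n)!`. -/
noncomputable def cosSqrt (t : ℝ) (x : R) : R :=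
  evenSum (fun n => coeff n (cosSeries x)) t

theorem cosSqrt_mul (s c : ℝ) (x : R) : cosSqrt (s * c) x = cosSqrt s (c ^ 2 • x) := by
  simp only [cosSqrt, evenSum, coeff_cosSeries_smul, mul_pow, pow_mul, smul_smul]

theorem evenSum_coeff_mul [CompleteSpace R] {φ ψ : R⟦X⟧}
    (hφ : HasEntireCoeffs fun n => coeff n φ) (hψ : HasEntireCoeffs fun n => coeff n ψ) (t : ℝ) :
    evenSum (fun n => coeff n (φ * ψ)) t =
      evenSum (fun n => coeff n φ) t * evenSum (fun n => coeff n ψ) t := by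
  rw [evenSum, evenSum, evenSum, tsum_mul_tsum_eq_tsum_sum_antidiagonal_of_summable_norm
    (hφ.summable_norm t) (hψ.summable_norm t)]
  refine tsum_congr fun n => ?_
  rw [coeff_mul, Finset.smul_sum]
  refine Finset.sum_congr rfl fun p hp => ?_
  rw [smul_mul_smul_comm, ← pow_add, ← mul_add, Finset.HasAntidiagonal.mem_antidiagonal.1 hp]

theorem evenSum_coeff_one (t : ℝ) : evenSum (fun n => coeff n (1 : R⟦X⟧)) t = 1 := by
  rw [evenSum, tsum_eq_single 0]
  · simp
  · intro n hn
    simp [coeff_one, hn]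

theorem prod_ofFn_evenSum [CompleteSpace R] {n : ℕ} {φ : Fin n → R⟦X⟧} {c : Fin n → ℝ}
    (h : ∀ i, IsMajorizedBy (φ i) (expSeries (c i))) (t : ℝ) :
    (List.ofFn fun i => evenSum (fun k => coeff k (φ i)) t).prod =
      evenSum (fun k => coeff k (List.ofFn φ).prod) t := by
  induction n with
  | zero => simpa using (evenSum_coeff_one t).symm
  | succ n ih =>
    simp only [List.ofFn_succ, List.prod_cons]
    rw [evenSum_coeff_mul (h 0).hasEntireCoeffs
      (IsMajorizedBy.prod_ofFn_expSeries fun i => h i.succ).hasEntireCoeffs,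
      ih fun i => h i.succ]

theorem hasSum_coeff_X_sq_mul_expSeries (c t : ℝ) :
    HasSum (fun n => t ^ (2 * n) * coeff n (X ^ 2 * expSeries c))
      (t ^ 4 * Real.exp (c * t ^ 2)) := by
  have hshift (n : ℕ) : t ^ (2 * (n + 2)) * coeff (n + 2) (X ^ 2 * expSeries c) =
      t ^ 4 * ((c * t ^ 2) ^ n / n.factorial) := by
    rw [coeff_X_pow_mul, coeff_expSeries, smul_eq_mul]
    ring
  rw [← hasSum_nat_add_iff' 2]
  simp only [hshift]
  simpa [Finset.sum_range_succ, coeff_X_pow_mul', ← exp_eq_exp_ℝ]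
    using (NormedSpace.expSeries_div_hasSum_exp (c * t ^ 2)).mul_left (t ^ 4)

theorem norm_evenSum_sub_le [CompleteSpace R] {φ ψ : R⟦X⟧} {κ : ℕ → ℝ} (hκ : ∀ n, |κ n| ≤ 1)
    (hφ : HasEntireCoeffs fun n => coeff n φ) (hψ : HasEntireCoeffs fun n => coeff n ψ) {C ρ : ℝ}
    (h : IsMajorizedBy (φ - ψ) (C • (X ^ 2 * expSeries ρ))) (t : ℝ) :
    ‖evenSum (fun n => κ n • coeff n φ) t - evenSum (fun n => κ n • coeff n ψ) t‖ ≤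
      ‖(1 : R)‖ * C * (t ^ 4 * Real.exp (ρ * t ^ 2)) := by
  have hκ' (n : ℕ) : |κ n| ≤ 1 * 1 ^ n := by simpa using hκ n
  rw [evenSum, evenSum, ← ((hφ.smul hκ').summable t).tsum_sub ((hψ.smul hκ').summable t)]
  refine tsum_of_norm_bounded ((hasSum_coeff_X_sq_mul_expSeries ρ t).mul_left _) fun n => ?_
  rw [← smul_sub, ← smul_sub, ← map_sub, norm_smul, norm_smul, norm_eq_abs, norm_eq_abs,
    abs_of_nonneg (Even.pow_nonneg (even_two_mul n) t)]
  calc t ^ (2 * n) * (|κ n| * ‖coeff n (φ - ψ)‖)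
      ≤ t ^ (2 * n) * (coeff n (C • (X ^ 2 * expSeries ρ)) * ‖(1 : R)‖) := by
        refine mul_le_mul_of_nonneg_left ?_ (Even.pow_nonneg (even_two_mul n) t)
        exact (mul_le_of_le_one_left (norm_nonneg _) (hκ n)).trans (h.norm_coeff_le n)
    _ = ‖(1 : R)‖ * C * (t ^ (2 * n) * coeff n (X ^ 2 * expSeries ρ)) := by
        rw [coeff_smul, smul_eq_mul]
        ring

end CosSqrt

section PolarIntegrals

open Set

variable {E : Type*} [NormedAddCommGroup E] [NormedSpace ℝ E] [FiniteDimensional ℝ E]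
  [MeasurableSpace E] [BorelSpace E] [Nontrivial E]

theorem integral_volumeIoiPow (n : ℕ) (f : ℝ → ℝ) :
    ∫ r : Ioi (0 : ℝ), f r ∂.volumeIoiPow n = ∫ r in Ioi (0 : ℝ), r ^ n * f r := by
  rw [Measure.volumeIoiPow, integral_withDensity_eq_integral_toReal_smul
    (f := fun r : Ioi (0 : ℝ) => ENNReal.ofReal (r.1 ^ n)) (by fun_prop)
    (.of_forall fun _ => ENNReal.ofReal_lt_top),
    integral_subtype_comap measurableSet_Ioi fun r => (ENNReal.ofReal (r ^ n)).toReal • f r]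
  refine setIntegral_congr_fun measurableSet_Ioi fun r hr => ?_
  simp only [ENNReal.toReal_ofReal (pow_nonneg (le_of_lt hr) n), smul_eq_mul]

theorem integral_homogeneous_mul_fun_norm (μ : Measure E) [μ.IsAddHaarMeasure] {p : E → ℝ} {d : ℕ}
    (hp : ∀ (r : ℝ) (x : E), p (r • x) = r ^ d * p x) (f : ℝ → ℝ) :
    ∫ x, p x * f ‖x‖ ∂μ = (∫ u : Metric.sphere (0 : E) 1, p u ∂μ.toSphere) *
      ∫ r in Ioi (0 : ℝ), r ^ (Module.finrank ℝ E - 1 + d) * f r := by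
  calc
    ∫ x, p x * f ‖x‖ ∂μ
        = ∫ x : ({(0)}ᶜ : Set E), p x.1 * f (‖x.1‖) ∂(μ.comap (↑)) := by
      rw [integral_subtype_comap (measurableSet_singleton _).compl fun x => p x * f (‖x‖),
        restrict_compl_singleton]
    _ = ∫ x, p x.1 * ((x.2 : ℝ) ^ d * f x.2)
          ∂μ.toSphere.prod (.volumeIoiPow (Module.finrank ℝ E - 1)) := by
      rw [← μ.measurePreserving_homeomorphUnitSphereProd.integral_comp
        (Homeomorph.measurableEmbedding _)]
      refine integral_congr_ae (.of_forall fun x => ?_)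
      have h := hp ‖x.1‖ (‖x.1‖⁻¹ • x.1)
      rw [smul_inv_smul₀ (norm_ne_zero_iff.2 x.2)] at h
      simp only [homeomorphUnitSphereProd_apply_snd_coe, homeomorphUnitSphereProd_apply_fst_coe]
      rw [h]
      ring
    _ = (∫ u : Metric.sphere (0 : E) 1, p u ∂μ.toSphere) *
          ∫ r : Ioi (0 : ℝ), (r : ℝ) ^ d * f r ∂.volumeIoiPow (Module.finrank ℝ E - 1) :=
      integral_prod_mul (fun u : Metric.sphere (0 : E) 1 => p u)
        (fun r : Ioi (0 : ℝ) => (r : ℝ) ^ d * f r)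
    _ = _ := by
      rw [integral_volumeIoiPow _ fun r => r ^ d * f r]
      simp only [pow_add, mul_assoc]

theorem setIntegral_closedBall_homogeneous_mul_fun_norm (μ : Measure E) [μ.IsAddHaarMeasure]
    {p : E → ℝ} {d : ℕ} (hp : ∀ (r : ℝ) (x : E), p (r • x) = r ^ d * p x) (f : ℝ → ℝ) (ρ : ℝ) :
    ∫ x in Metric.closedBall 0 ρ, p x * f ‖x‖ ∂μ =
      (∫ u : Metric.sphere (0 : E) 1, p u ∂μ.toSphere) *
        ∫ r in Ioc 0 ρ, r ^ (Module.finrank ℝ E - 1 + d) * f r := by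
  have hball : (Metric.closedBall (0 : E) ρ).indicator (fun x => p x * f ‖x‖) =
      fun x => p x * (Iic ρ).indicator f ‖x‖ := by
    ext x
    by_cases hx : ‖x‖ ≤ ρ <;> simp [hx]
  have hIoc (n : ℕ) : ∫ r in Ioi (0 : ℝ), r ^ n * (Iic ρ).indicator f r =
      ∫ r in Ioc 0 ρ, r ^ n * f r := by
    rw [← Ioi_inter_Iic, ← setIntegral_indicator measurableSet_Iic]
    simp only [indicator_mul_right]
  rw [← integral_indicator Metric.isClosed_closedBall.measurableSet, hball,
    integral_homogeneous_mul_fun_norm μ hp, hIoc]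

end PolarIntegrals

section RadialIntegrals

open Set

theorem integral_pow_mul_exp_neg_sq_Ioi (n : ℕ) :
    ∫ r in Ioi (0 : ℝ), r ^ n * exp (-r ^ 2) = Gamma ((n + 1) / 2) / 2 := by
  have h := integral_rpow_mul_exp_neg_rpow (p := 2) (q := n) two_pos
    (by have := n.cast_nonneg (α := ℝ); linarith)
  simp only [rpow_natCast, rpow_two] at h
  rw [h]
  ring

theorem integral_rpow_mul_one_sub_rpow {a b : ℝ} (ha : 0 < a) (hb : 0 < b) :
    ∫ x in Ioc (0 : ℝ) 1, x ^ (a - 1) * (1 - x) ^ (b - 1) =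
      Gamma a * Gamma b / Gamma (a + b) := by
  have hreal : ∀ x ∈ Ioc (0 : ℝ) 1, ((x : ℂ) ^ ((a : ℂ) - 1) * (1 - (x : ℂ)) ^ ((b : ℂ) - 1)) =
      ((x ^ (a - 1) * (1 - x) ^ (b - 1) : ℝ) : ℂ) := fun x hx => by
    rw [Complex.ofReal_mul, Complex.ofReal_cpow hx.1.le, Complex.ofReal_cpow (by linarith [hx.2])]
    push_cast
    rfl
  have hbeta := ProbabilityTheory.beta_eq_betaIntegralReal a b ha hb
  rw [ProbabilityTheory.beta] at hbeta
  rw [hbeta, Complex.betaIntegral, intervalIntegral.integral_of_le zero_le_one,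
    setIntegral_congr_fun measurableSet_Ioc hreal, integral_complex_ofReal, Complex.ofReal_re]

theorem integral_pow_mul_one_sub_sq_rpow (n : ℕ) {e : ℝ} (he : -1 < e) :
    ∫ r in Ioc (0 : ℝ) 1, r ^ n * (1 - r ^ 2) ^ e =
      Gamma ((n + 1) / 2) * Gamma (e + 1) / Gamma ((n + 1) / 2 + (e + 1)) / 2 := by
  set g : ℝ → ℝ := (Iic (1 : ℝ)).indicator fun x => x ^ ((n + 1) / 2 - 1 : ℝ) * (1 - x) ^ e
  have hg : ∫ x in Ioi 0, g x =
      Gamma ((n + 1) / 2) * Gamma (e + 1) / Gamma ((n + 1) / 2 + (e + 1)) := by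
    rw [setIntegral_indicator measurableSet_Iic, Ioi_inter_Iic,
      ← integral_rpow_mul_one_sub_rpow (by positivity) (by linarith), add_sub_cancel_right]
  have hsubst : EqOn (fun x : ℝ => (2 * x ^ ((2 : ℝ) - 1)) • g (x ^ (2 : ℝ)))
      (fun r => 2 * (Iic (1 : ℝ)).indicator (fun r => r ^ n * (1 - r ^ 2) ^ e) r) (Ioi 0) := by
    intro x hx
    have hx : 0 < x := hx
    have hpow : x * (x ^ 2) ^ ((n + 1) / 2 - 1 : ℝ) = x ^ n := by
      calc x * (x ^ 2) ^ ((n + 1) / 2 - 1 : ℝ)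
          = x ^ (1 : ℝ) * x ^ (2 * ((n + 1) / 2 - 1) : ℝ) := by
            rw [rpow_one, rpow_mul hx.le, rpow_two]
        _ = x ^ n := by
            rw [← rpow_add hx, ← rpow_natCast]
            ring_nf
    simp only [g, indicator_apply, mem_Iic, rpow_two, sq_le_one_iff₀ hx.le, ← hpow]
    split_ifs
    · norm_num
      ring
    · simp
  have h := integral_comp_rpow_Ioi_of_pos (g := g) two_pos
  rw [setIntegral_congr_fun measurableSet_Ioi hsubst, integral_const_mul, hg,
    setIntegral_indicator measurableSet_Iic, Ioi_inter_Iic] at h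
  linarith

end RadialIntegrals

section DirichletIntegrals

variable {ι : Type*} [Fintype ι]

theorem integral_pow_two_mul_mul_exp_neg_sq (k : ℕ) :
    ∫ x : ℝ, x ^ (2 * k) * exp (-x ^ 2) = Gamma (k + 1 / 2) := by
  have h := integral_comp_abs (f := fun x => x ^ (2 * k) * exp (-x ^ 2))
  simp only [sq_abs, pow_mul] at h
  simp only [pow_mul]
  rw [h]
  simp only [← pow_mul]
  rw [integral_pow_mul_exp_neg_sq_Ioi]
  push_cast
  rw [show ((2 * (k:ℝ) + 1) / 2) = k + 1 / 2 by ring]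
  ring

theorem integral_prod_pow_mul_exp_neg_norm_sq (k : ι → ℕ) :
    ∫ x : EuclideanSpace ℝ ι, (∏ i, x i ^ (2 * k i)) * exp (-‖x‖ ^ 2) =
      ∏ i, Gamma (k i + 1 / 2) := by
  rw [← (EuclideanSpace.volume_preserving_symm_measurableEquiv_toLp ι).symm.integral_comp
    (MeasurableEquiv.measurableEmbedding _)]
  simp_rw [← integral_pow_two_mul_mul_exp_neg_sq]
  rw [← integral_fintype_prod_volume_eq_prod]
  refine integral_congr_ae (.of_forall fun x => ?_)
  simp only [EuclideanSpace.norm_sq_eq, Finset.prod_mul_distrib, ← exp_sum,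
    Finset.sum_neg_distrib]
  simp

theorem setIntegral_closedBall_prod_pow_mul_one_sub_norm_sq_rpow [Nonempty ι] (k : ι → ℕ) {e : ℝ}
    (he : -1 < e) :
    ∫ x in Metric.closedBall (0 : EuclideanSpace ℝ ι) 1,
        (∏ i, x i ^ (2 * k i)) * (1 - ‖x‖ ^ 2) ^ e =
      (∏ i, Gamma (k i + 1 / 2)) * Gamma (e + 1) /
        Gamma (∑ i, k i + Fintype.card ι / 2 + (e + 1)) := by
  have hp (r : ℝ) (x : EuclideanSpace ℝ ι) :
      ∏ i, (r • x) i ^ (2 * k i) = r ^ (2 * ∑ i, k i) * ∏ i, x i ^ (2 * k i) := by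
    simp [mul_pow, Finset.prod_mul_distrib, Finset.prod_pow_eq_pow_sum, Finset.mul_sum]
  have hdim : ((Module.finrank ℝ (EuclideanSpace ℝ ι) - 1 + 2 * ∑ i, k i : ℕ) + 1 : ℝ) / 2 =
      ∑ i, k i + Fintype.card ι / 2 := by
    rw [finrank_euclideanSpace]
    have := Nat.succ_le_of_lt (Fintype.card_pos (α := ι))
    push_cast [this]
    ring
  -- The Gaussian weight has the same spherical factor, and its integral is known.
  have hgauss := integral_prod_pow_mul_exp_neg_norm_sq k
  rw [integral_homogeneous_mul_fun_norm volume hp (fun r => exp (-r ^ 2)),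
    integral_pow_mul_exp_neg_sq_Ioi, hdim] at hgauss
  rw [setIntegral_closedBall_homogeneous_mul_fun_norm volume hp (fun r => (1 - r ^ 2) ^ e),
    integral_pow_mul_one_sub_sq_rpow _ he, hdim, ← hgauss]
  ring

theorem integrableOn_closedBall_one_sub_norm_sq_rpow [Nonempty ι] {e : ℝ} (he : -1 < e) :
    IntegrableOn (fun x : EuclideanSpace ℝ ι => (1 - ‖x‖ ^ 2) ^ e) (Metric.closedBall 0 1) := by
  refine Integrable.of_integral_ne_zero ?_
  have h := setIntegral_closedBall_prod_pow_mul_one_sub_norm_sq_rpow (fun _ : ι => 0) he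
  simp only [mul_zero, pow_zero, Finset.prod_const_one, one_mul] at h
  rw [h]
  have he' : 0 < e + 1 := by linarith
  positivity

end DirichletIntegrals

section GammaRatios

theorem Gamma_nat_add_half_mul_cosRatio (k : ℕ) :
    Gamma (k + 1 / 2) * cosRatio k = √π * (-1 / 4) ^ k := by
  have hGamma : Gamma (k + 1 / 2) = √π * ((2 * k).factorial / (4 ^ k * k.factorial)) := by
    induction k with
    | zero => simp [-one_div, Gamma_one_half_eq]
    | succ k ih =>
      rw [show ((k + 1 : ℕ) : ℝ) + 1 / 2 = (k + 1 / 2) + 1 by push_cast; ring,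
        Gamma_add_one (by positivity), ih, show 2 * (k + 1) = 2 * k + 1 + 1 by ring,
        Nat.factorial_succ, Nat.factorial_succ, Nat.factorial_succ]
      push_cast
      field_simp
      ring
  rw [hGamma, cosRatio, div_pow]
  field_simp

theorem Gamma_nat_add_nat_add_half (N m : ℕ) :
    Gamma (N + m + 1 / 2) =
      Gamma (N + 1 / 2) * (∏ i ∈ Finset.range m, (2 * N + (2 * i + 1) : ℝ)) / 2 ^ m := by
  induction m with
  | zero => simp
  | succ m ih =>
    rw [show (N : ℝ) + (m + 1 : ℕ) + 1 / 2 = (N + m + 1 / 2) + 1 by push_cast; ring,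
      Gamma_add_one (by positivity), ih, Finset.prod_range_succ]
    field_simp
    ring

/-- The factor by which integrating a product of `n` series `cos (s √(ωᵢ² xᵢ))` over the unit ball
of `ℝⁿ` with weight `(1 - ‖ω‖²) ^ e` multiplies the `N`-th Taylor coefficient of the product of the
series `exp (z xᵢ)`. -/
noncomputable def momentFactor (n : ℕ) (e : ℝ) (N : ℕ) : ℝ :=
  (-1 / 4) ^ N * √π ^ n * Gamma (e + 1) / Gamma (N + n / 2 + (e + 1))

theorem momentFactor_neg_half (m N : ℕ) :
    momentFactor (2 * m) (-1 / 2) N =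
      (2 * π) ^ m * cosRatio N / ∏ i ∈ Finset.range m, (2 * N + (2 * i + 1) : ℝ) := by
  have hGamma : Gamma (N + 1 / 2) ≠ 0 := by positivity
  have hsum : (N : ℝ) + (2 * m : ℕ) / 2 + (-1 / 2 + 1) = N + m + 1 / 2 := by push_cast; ring
  have hratio := Gamma_nat_add_half_mul_cosRatio N
  rw [momentFactor, hsum, show (-1 / 2 + 1 : ℝ) = 1 / 2 by norm_num, Gamma_one_half_eq,
    Gamma_nat_add_nat_add_half, pow_mul, sq_sqrt pi_pos.le, mul_pow]
  rw [mul_assoc, mul_comm, mul_assoc, ← hratio]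
  field_simp [hGamma]

end GammaRatios

section BallIntegrals

open PowerSeries

variable {n : ℕ} [NeZero n] {e : ℝ} {F : Type*} [NormedAddCommGroup F] [NormedSpace ℝ F]

theorem integrableOn_closedBall_rpow_smul (he : -1 < e) {f : EuclideanSpace ℝ (Fin n) → F}
    (hf : Continuous f) :
    IntegrableOn (fun ω => (1 - ‖ω‖ ^ 2) ^ e • f ω) (Metric.closedBall 0 1) :=
  (integrableOn_closedBall_one_sub_norm_sq_rpow he).smul_continuousOn hf.continuousOn
    (isCompact_closedBall 0 1)

theorem setIntegral_closedBall_rpow_smul_evenSum [CompleteSpace F] (he : -1 < e)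
    {a : ℕ → EuclideanSpace ℝ (Fin n) → F} {u : ℕ → ℝ} (ha : ∀ N, Continuous (a N))
    (hau : ∀ N, ∀ ω ∈ Metric.closedBall 0 1, ‖a N ω‖ ≤ u N) (hu : HasEntireCoeffs u) (s : ℝ) :
    ∫ ω in Metric.closedBall (0 : EuclideanSpace ℝ (Fin n)) 1,
        (1 - ‖ω‖ ^ 2) ^ e • evenSum (fun N => a N ω) s =
      evenSum (fun N => ∫ ω in Metric.closedBall (0 : EuclideanSpace ℝ (Fin n)) 1,
        (1 - ‖ω‖ ^ 2) ^ e • a N ω) s := by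
  set B := Metric.closedBall (0 : EuclideanSpace ℝ (Fin n)) 1
  have hB : MeasurableSet B := Metric.isClosed_closedBall.measurableSet
  have hle (N : ℕ) (ω) (hω : ω ∈ B) : ‖a N ω‖ ≤ 1 * 1 ^ N * ‖u N‖ := by
    simpa using (hau N ω hω).trans (le_norm_self _)
  have hsum := hasSum_integral_of_dominated_convergence (μ := volume.restrict B)
    (F := fun N ω => (1 - ‖ω‖ ^ 2) ^ e • s ^ (2 * N) • a N ω)
    (f := fun ω => (1 - ‖ω‖ ^ 2) ^ e • evenSum (fun N => a N ω) s)
    (fun N ω => ‖(1 - ‖ω‖ ^ 2) ^ e‖ * ‖s ^ (2 * N) • u N‖)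
    (fun N => (integrableOn_closedBall_rpow_smul he
      ((ha N).const_smul (s ^ (2 * N)))).aestronglyMeasurable)
    (fun N => ae_restrict_of_forall_mem hB fun ω hω => by
      rw [norm_smul, norm_smul, norm_smul]
      gcongr
      exact (hau N ω hω).trans (le_norm_self _))
    (.of_forall fun ω => (hu.summable_norm s).mul_left _)
    (by
      simp only [tsum_mul_left]
      exact (integrableOn_closedBall_one_sub_norm_sq_rpow he).norm.mul_const _)
    (ae_restrict_of_forall_mem hB fun ω hω =>
      (((hu.of_norm_le fun N => hle N ω hω).summable s).hasSum).const_smul _)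
  rw [← hsum.tsum_eq, evenSum]
  refine tsum_congr fun N => ?_
  simp only [smul_comm (((1 : ℝ) - _) ^ e) (s ^ (2 * N))]
  rw [integral_smul]

end BallIntegrals

section BallMoments

open PowerSeries

variable {R : Type*} [NormedRing R] [NormedAlgebra ℝ R] {n : ℕ}

theorem coeff_prod_ofFn_cosSeries_sq_smul (x : Fin n → R) (N : ℕ) (ω : Fin n → ℝ) :
    coeff N (List.ofFn fun i => cosSeries (ω i ^ 2 • x i)).prod =
      ∑ k ∈ Finset.Nat.antidiagonalTuple n N,
        (∏ i, ω i ^ (2 * k i)) • (List.ofFn fun i => coeff (k i) (cosSeries (x i))).prod := by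
  simp only [coeff_prod_ofFn, coeff_cosSeries_smul, prod_ofFn_smul, pow_mul]

theorem isMajorizedBy_prod_ofFn_cosSeries_sq_smul (x : Fin n → R)
    {ω : EuclideanSpace ℝ (Fin n)} (hω : ω ∈ Metric.closedBall 0 1) :
    IsMajorizedBy (List.ofFn fun i => cosSeries (ω i ^ 2 • x i)).prod
      (expSeries (∑ i, ‖x i‖)) :=
  IsMajorizedBy.prod_ofFn_expSeries fun i => isMajorizedBy_cosSeries <| by
    rw [norm_smul, norm_pow]
    exact mul_le_of_le_one_left (norm_nonneg _)
      (pow_le_one₀ (norm_nonneg _) ((PiLp.norm_apply_le ω i).trans (mem_closedBall_zero_iff.1 hω)))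

theorem setIntegral_closedBall_rpow_smul_coeff_cosSeries [CompleteSpace R] [NeZero n]
    {e : ℝ} (he : -1 < e) (x : Fin n → R) (N : ℕ) :
    ∫ ω in Metric.closedBall (0 : EuclideanSpace ℝ (Fin n)) 1,
        (1 - ‖ω‖ ^ 2) ^ e • coeff N (List.ofFn fun i => cosSeries (ω i ^ 2 • x i)).prod =
      momentFactor n e N • coeff N (List.ofFn fun i => expSeries (x i)).prod := by
  have hmoment (k : Fin n → ℕ) (hk : ∑ i, k i = N) :
      (∫ ω in Metric.closedBall (0 : EuclideanSpace ℝ (Fin n)) 1,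
        (1 - ‖ω‖ ^ 2) ^ e * ∏ i, ω i ^ (2 * k i)) * ∏ i, cosRatio (k i) = momentFactor n e N := by
    simp only [mul_comm (((1 : ℝ) - _) ^ e)]
    rw [setIntegral_closedBall_prod_pow_mul_one_sub_norm_sq_rpow k he, div_mul_eq_mul_div,
      mul_right_comm, ← Finset.prod_mul_distrib, Finset.prod_congr rfl fun i _ =>
        Gamma_nat_add_half_mul_cosRatio (k i), Finset.prod_mul_distrib, Finset.prod_const,
      Finset.prod_pow_eq_pow_sum, hk, Finset.card_univ, Fintype.card_fin, momentFactor,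
      mul_comm (√π ^ n)]
  simp only [coeff_prod_ofFn_cosSeries_sq_smul, Finset.smul_sum]
  rw [integral_finsetSum _ fun k _ => integrableOn_closedBall_rpow_smul he (by fun_prop),
    coeff_prod_ofFn, Finset.smul_sum]
  refine Finset.sum_congr rfl fun k hk => ?_
  simp only [coeff_cosSeries, prod_ofFn_smul, smul_smul]
  simp only [← mul_assoc]
  rw [integral_smul_const, integral_mul_const, hmoment k (Finset.Nat.mem_antidiagonalTuple.1 hk)]

theorem setIntegral_closedBall_rpow_smul_prod_cosSqrt [CompleteSpace R] [NeZero n] {e : ℝ}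
    (he : -1 < e) (x : Fin n → R) (s : ℝ) :
    ∫ ω in Metric.closedBall (0 : EuclideanSpace ℝ (Fin n)) 1,
        (1 - ‖ω‖ ^ 2) ^ e • (List.ofFn fun i => cosSqrt s (ω i ^ 2 • x i)).prod =
      evenSum (fun N => momentFactor n e N • coeff N (List.ofFn fun i => expSeries (x i)).prod)
        s := by
  have hprod (ω : EuclideanSpace ℝ (Fin n)) :
      (List.ofFn fun i => cosSqrt s (ω i ^ 2 • x i)).prod =
        evenSum (fun N => coeff N (List.ofFn fun i => cosSeries (ω i ^ 2 • x i)).prod) s :=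
    prod_ofFn_evenSum (fun i => isMajorizedBy_cosSeries le_rfl) s
  have hu : HasEntireCoeffs fun N => coeff N (expSeries (∑ i, ‖x i‖)) * ‖(1 : R)‖ :=
    (hasEntireCoeffs_expSeries _).of_norm_le (C := ‖(1 : R)‖) (q := 1) fun N => by
      rw [norm_mul, norm_norm, one_pow, mul_one, mul_comm]
  simp only [hprod]
  rw [setIntegral_closedBall_rpow_smul_evenSum he ?_ (fun N ω hω =>
    (isMajorizedBy_prod_ofFn_cosSeries_sq_smul x hω).norm_coeff_le N) hu]
  · simp only [setIntegral_closedBall_rpow_smul_coeff_cosSeries he]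
  · intro N
    simp only [coeff_prod_ofFn_cosSeries_sq_smul]
    fun_prop

end BallMoments

section TrotterLimit

open PowerSeries

theorem abs_momentFactor_neg_half_le (m N : ℕ) :
    |momentFactor (2 * m) (-1 / 2) N| ≤ (2 * π) ^ m := by
  have hprod : 1 ≤ ∏ i ∈ Finset.range m, (2 * N + (2 * i + 1) : ℝ) :=
    Finset.one_le_prod fun i _ => by
      linarith [(by positivity : (0 : ℝ) ≤ 2 * N + 2 * i)]
  rw [momentFactor_neg_half, mul_div_assoc, abs_mul, abs_div,
    abs_of_pos (by positivity : 0 < (2 * π) ^ m), abs_of_pos (zero_lt_one.trans_le hprod)]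
  exact mul_le_of_le_one_right (by positivity)
    ((div_le_self (abs_nonneg _) hprod).trans (abs_cosRatio_le_one N))

variable {R : Type*} [NormedRing R] [NormedAlgebra ℝ R] [CompleteSpace R]

theorem setIntegral_closedBall_rpow_smul_prod_cosSqrt_alternate (x y : R) {m : ℕ} (hm : m ≠ 0)
    (s : ℝ) :
    ∫ ω in Metric.closedBall (0 : EuclideanSpace ℝ (Fin (2 * m))) 1,
        (1 - ‖ω‖ ^ 2) ^ (-(1 : ℝ) / 2) • (List.ofFn fun i : Fin (2 * m) =>
          cosSqrt (s * ω i / √m) (if (i : ℕ) % 2 = 0 then x else y)).prod =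
      evenSum (fun N => momentFactor (2 * m) (-1 / 2) N • coeff N (trotterSeries x y m)) s := by
  have : NeZero (2 * m) := ⟨by omega⟩
  have hscale (c : ℝ) (z : R) : cosSqrt (s * c / √m) z = cosSqrt s (c ^ 2 • (m : ℝ)⁻¹ • z) := by
    rw [mul_div_assoc, cosSqrt_mul, div_pow, sq_sqrt m.cast_nonneg, smul_smul, div_eq_mul_inv]
  simp only [hscale]
  rw [setIntegral_closedBall_rpow_smul_prod_cosSqrt (by norm_num)
    (fun i : Fin (2 * m) => (m : ℝ)⁻¹ • if (i : ℕ) % 2 = 0 then x else y), trotterSeries,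
    ← prod_ofFn_alternate]
  simp only [apply_ite]

theorem deriv_dop_iterate_setIntegral_closedBall_prod_cosSqrt (x y : R) {m : ℕ} (hm : m ≠ 0)
    (t : ℝ) :
    deriv (Dop^[m - 1] fun s => s ^ (2 * m - 1) •
        ∫ ω in Metric.closedBall (0 : EuclideanSpace ℝ (Fin (2 * m))) 1,
          (1 - ‖ω‖ ^ 2) ^ (-(1 : ℝ) / 2) • (List.ofFn fun i : Fin (2 * m) =>
            cosSqrt (s * ω i / √m) (if (i : ℕ) % 2 = 0 then x else y)).prod) t =
      (2 * π) ^ m • evenSum (fun N => cosRatio N • coeff N (trotterSeries x y m)) t := by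
  have entire : HasEntireCoeffs fun N =>
      momentFactor (2 * m) (-1 / 2) N • coeff N (trotterSeries x y m) :=
    (isMajorizedBy_trotterSeries x y hm).hasEntireCoeffs.smul (C := (2 * π) ^ m) (q := 1)
      fun N => by simpa using abs_momentFactor_neg_half_le m N
  simp only [setIntegral_closedBall_rpow_smul_prod_cosSqrt_alternate x y hm]
  rw [show 2 * m - 1 = 2 * (m - 1) + 1 by omega, entire.deriv_dop_iterate_pow_smul_evenSum,
    Nat.sub_add_cancel (Nat.one_le_iff_ne_zero.2 hm), evenSum, evenSum, ← tsum_const_smul'']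
  refine tsum_congr fun N => ?_
  have hprod : 0 < ∏ i ∈ Finset.range m, (2 * N + (2 * i + 1) : ℝ) :=
    Finset.prod_pos fun i _ => by positivity
  rw [momentFactor_neg_half, smul_comm ((2 * π) ^ m), smul_smul (∏ i ∈ _, _),
    mul_div_cancel₀ _ hprod.ne', mul_smul]

theorem norm_evenSum_trotterSeries_sub_cosSqrt_le (x y : R) {m : ℕ} (hm : m ≠ 0) (t : ℝ) :
    ‖evenSum (fun N => cosRatio N • coeff N (trotterSeries x y m)) t - cosSqrt t (x + y)‖ ≤
      ‖(1 : R)‖ * ((‖x‖ + ‖y‖) ^ 2 / m) * (t ^ 4 * Real.exp ((‖x‖ + ‖y‖) * t ^ 2)) := by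
  simp only [cosSqrt, coeff_cosSeries]
  exact norm_evenSum_sub_le abs_cosRatio_le_one
    (isMajorizedBy_trotterSeries x y hm).hasEntireCoeffs
    (IsMajorizedBy.expSeries_of_norm_le le_rfl).hasEntireCoeffs
    (isMajorizedBy_trotterSeries_sub_expSeries x y hm) t

theorem tendstoUniformlyOn_evenSum_trotterSeries (x y : R) (b : ℝ) :
    TendstoUniformlyOn (fun m t => evenSum (fun N => cosRatio N • coeff N (trotterSeries x y m)) t)
      (fun t => cosSqrt t (x + y)) atTop (Metric.closedBall 0 b) := by
  set ρ := ‖x‖ + ‖y‖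
  set K := ‖(1 : R)‖ * ρ ^ 2 * (b ^ 4 * Real.exp (ρ * b ^ 2))
  rw [Metric.tendstoUniformlyOn_iff]
  intro ε hε
  filter_upwards [(tendsto_const_div_atTop_nhds_zero_nat K).eventually_lt_const hε,
    eventually_ne_atTop 0] with m hmε hm t ht
  have ht : |t| ≤ |b| := (mem_closedBall_zero_iff.1 ht).trans (le_abs_self b)
  rw [dist_comm, dist_eq_norm]
  calc _ ≤ ‖(1 : R)‖ * (ρ ^ 2 / m) * (t ^ 4 * Real.exp (ρ * t ^ 2)) :=
        norm_evenSum_trotterSeries_sub_cosSqrt_le x y hm t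
    _ ≤ ‖(1 : R)‖ * (ρ ^ 2 / m) * (b ^ 4 * Real.exp (ρ * b ^ 2)) := by
        have hsq : t ^ 2 ≤ b ^ 2 := sq_le_sq.2 ht
        rw [pow_mul t 2 2, pow_mul b 2 2]
        gcongr
    _ = K / m := by ring
    _ < ε := hmε

theorem stmt15_general (x y : R) (G : ℕ → ℝ → R)
    (hG : ∀ m : ℕ, 1 ≤ m → ∀ s : ℝ, G m s = s ^ (2 * m - 1) •
      ∫ ω in Metric.closedBall (0 : EuclideanSpace ℝ (Fin (2 * m))) 1,
        (1 - ‖ω‖ ^ 2) ^ (-(1 : ℝ) / 2) • (List.ofFn fun i : Fin (2 * m) =>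
          cosSqrt (s * ω i / √m) (if (i : ℕ) % 2 = 0 then x else y)).prod)
    (F : ℕ → ℝ → R)
    (hF : ∀ m : ℕ, 1 ≤ m → ∀ t : ℝ, F m t = (1 / (2 * π) ^ m) • deriv (Dop^[m - 1] (G m)) t)
    (b : ℝ) :
    TendstoUniformlyOn F (fun t => cosSqrt t (x + y)) atTop (Set.Ioc 0 b) := by
  have hsub : Set.Ioc 0 b ⊆ Metric.closedBall 0 b := fun t ht =>
    mem_closedBall_zero_iff.2 ((norm_of_nonneg ht.1.le).trans_le ht.2)
  refine ((tendstoUniformlyOn_evenSum_trotterSeries x y b).mono hsub).congr ?_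
  filter_upwards [eventually_ge_atTop 1] with m hm t _
  rw [hF m hm, funext (hG m hm), deriv_dop_iterate_setIntegral_closedBall_prod_cosSqrt x y
    (Nat.one_le_iff_ne_zero.1 hm), smul_smul, one_div_mul_cancel (by positivity), one_smul]

end TrotterLimit

section FunctionalCalculus

variable {R : Type*} [NormedRing R] [NormedAlgebra ℝ R]

theorem cosSqrt_eq_tsum (t : ℝ) (x : R) :
    cosSqrt t x = ∑' n : ℕ, t ^ (2 * n) • ((-1) ^ n / (2 * n).factorial : ℝ) • x ^ n := by
  simp only [cosSqrt, evenSum, cosSeries, PowerSeries.coeff_mk]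

theorem cosSqrt_of_nonneg (t : ℝ) {x : ℝ} (hx : 0 ≤ x) : cosSqrt t x = Real.cos (t * √x) := by
  rw [cosSqrt_eq_tsum, Real.cos_eq_tsum]
  refine tsum_congr fun n => ?_
  rw [mul_pow, pow_mul (√x), sq_sqrt hx, smul_eq_mul, smul_eq_mul]
  ring

theorem map_cosSqrt [CompleteSpace R] {S : Type*} [NormedRing S] [NormedAlgebra ℝ S]
    (f : R →ₐ[ℝ] S) (hf : Continuous f) (t : ℝ) (x : R) : f (cosSqrt t x) = cosSqrt t (f x) := by
  have hsum := (isMajorizedBy_cosSeries (le_refl ‖x‖)).hasEntireCoeffs.summable t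
  rw [cosSqrt, evenSum, hsum.map_tsum f hf, cosSqrt_eq_tsum]
  simp only [cosSeries, PowerSeries.coeff_mk, map_smul, map_pow]

theorem cfc_cos_mul_sqrt [StarRing R] {p : R → Prop} [ContinuousFunctionalCalculus ℝ R p]
    {a : R} (ha : p a) (hpos : ∀ x ∈ spectrum ℝ a, 0 ≤ x) (t : ℝ) :
    cfc (fun x : ℝ => Real.cos (t * √x)) a = cosSqrt t a := by
  have : CompactSpace (spectrum ℝ a) :=
    isCompact_iff_compactSpace.1 (ContinuousFunctionalCalculus.isCompact_spectrum a)
  set ι : C(spectrum ℝ a, ℝ) := .restrict (spectrum ℝ a) (.id ℝ)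
  have hcos : (⟨fun x => Real.cos (t * √x), by fun_prop⟩ : C(spectrum ℝ a, ℝ)) = cosSqrt t ι := by
    ext x
    exact ((map_cosSqrt (ContinuousMap.evalAlgHom ℝ ℝ x) (by fun_prop) t ι).trans
      (cosSqrt_of_nonneg t (hpos x x.2))).symm
  have hmap := map_cosSqrt (cfcHom (R := ℝ) ha : C(spectrum ℝ a, ℝ) →ₐ[ℝ] R)
    (cfcHom_continuous ha) t ι
  rw [cfc_apply _ a ha (by fun_prop)]
  exact (congrArg (cfcHom ha) hcos).trans (hmap.trans (congrArg _ (cfcHom_id ha)))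

theorem cosOp_eq_cosSqrt {H : Type*} [NormedAddCommGroup H] [InnerProductSpace ℂ H] (s : ℝ)
    (T : H →L[ℂ] H) : cosOp s T = cosSqrt s (T ^ 2) := by
  rw [cosOp, cosSqrt_eq_tsum]
  refine tsum_congr fun n => ?_
  rw [smul_smul, ← pow_mul, mul_div_assoc', mul_comm (s ^ (2 * n))]

end FunctionalCalculus

theorem stmt15 {H : Type*} [NormedAddCommGroup H] [InnerProductSpace ℂ H] [CompleteSpace H]
    (A B : H →L[ℂ] H) (hA : IsSelfAdjoint A) (hB : IsSelfAdjoint B)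
    (G : ℕ → ℝ → (H →L[ℂ] H))
    (hG : ∀ m : ℕ, 1 ≤ m → ∀ s : ℝ, G m s = s ^ (2*m-1) •
      ∫ ω in Metric.closedBall (0 : EuclideanSpace ℝ (Fin (2*m))) 1,
        ((1 - ‖ω‖^2) ^ (-(1:ℝ)/2)) •
          (List.ofFn (fun i : Fin (2*m) =>
            cosOp (s * ω i / Real.sqrt m) (if (i : ℕ) % 2 = 0 then A else B))).prod)
    (F : ℕ → ℝ → (H →L[ℂ] H))
    (hF : ∀ m : ℕ, 1 ≤ m → ∀ t : ℝ,
      F m t = (1 / (2*π)^m) • deriv (Dop^[m-1] (G m)) t) :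
    ∀ a b : ℝ, 0 < a → a ≤ b →
      TendstoUniformlyOn (fun m t => F m t)
        (fun t => cfc (fun x : ℝ => Real.cos (t * Real.sqrt x)) (A^2 + B^2))
        atTop (Set.Icc a b) := by
  intro a b ha _
  have hS : 0 ≤ A ^ 2 + B ^ 2 := add_nonneg hA.sq_nonneg hB.sq_nonneg
  simp only [cosOp_eq_cosSqrt, ite_pow] at hG
  exact ((stmt15_general (A ^ 2) (B ^ 2) G hG F hF b).mono fun t ht =>
    ⟨ha.trans_le ht.1, ht.2⟩).congr_right fun t _ =>
      (cfc_cos_mul_sqrt (.of_nonneg hS) (fun _ hx => spectrum_nonneg_of_nonneg hS hx) t).symm
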